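/- Let C > 0, μ₀ > 0, ε₀ > 0 be real constants with C² = 1/(μ₀ε₀). Let ρ : ℝ³ × ℝ → ℝ and j : ℝ³ × ℝ → ℝ³ be smooth, with a compact set K ⊆ ℝ³ such that supp ρ(·,t) ⊆ K and supp j(·,t) ⊆ K for every t, and suppose the continuity equation ∂ρ/∂t(x,t) + (∇·j)(x,t) = 0 holds for all (x,t). Define the retarded potentials A(x,t) = (μ₀/4π) ∫_{ℝ³} j(y, t − |x−y|/C)/|x−y| dy and V(x,t) = (1/(4πε₀)) ∫_{ℝ³} ρ(y, t − |x−y|/C)/|x−y| dy. Then the Lorenz gauge condition holds: (∇·A)(x,t) + (1/C²) ∂V/∂t(x,t) = 0 for all (x,t) ∈ ℝ³ × ℝ. -/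

import Mathlib

noncomputable section

open MeasureTheory Real

abbrev V3 := Fin 3 → ℝ

def dot3 (a b : V3) : ℝ := ∑ i, a i * b i

def norm3 (a : V3) : ℝ := Real.sqrt (dot3 a a)

def cross3 (a b : V3) : V3 :=
  ![a 1 * b 2 - a 2 * b 1, a 2 * b 0 - a 0 * b 2, a 0 * b 1 - a 1 * b 0]

/-- Spatial partial derivative in direction `i` of a time-dependent field. -/
def pdS {F : Type*} [NormedAddCommGroup F] [NormedSpace ℝ F]
    (i : Fin 3) (f : V3 × ℝ → F) (p : V3 × ℝ) : F :=
  fderiv ℝ (fun y => f (y, p.2)) p.1 (Pi.single i 1)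

/-- Partial time derivative of a time-dependent field. -/
def pdT {F : Type*} [NormedAddCommGroup F] [NormedSpace ℝ F]
    (f : V3 × ℝ → F) (p : V3 × ℝ) : F :=
  deriv (fun s => f (p.1, s)) p.2

/-- Spatial gradient. -/
def grad (f : V3 × ℝ → ℝ) (p : V3 × ℝ) : V3 := fun i => pdS i f p

/-- Spatial divergence. -/
def divg (A : V3 × ℝ → V3) (p : V3 × ℝ) : ℝ := ∑ i, pdS i (fun q => A q i) p

/-- Spatial curl. -/
def curl (A : V3 × ℝ → V3) (p : V3 × ℝ) : V3 :=
  ![pdS 1 (fun q => A q 2) p - pdS 2 (fun q => A q 1) p,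
    pdS 2 (fun q => A q 0) p - pdS 0 (fun q => A q 2) p,
    pdS 0 (fun q => A q 1) p - pdS 1 (fun q => A q 0) p]

/-- Spatial Laplacian (componentwise for vector-valued fields). -/
def lap {F : Type*} [NormedAddCommGroup F] [NormedSpace ℝ F]
    (f : V3 × ℝ → F) (p : V3 × ℝ) : F :=
  ∑ i, pdS i (pdS i f) p

/-- Spatial directional derivative `(a·∇)f`. -/
def dirS {F : Type*} [NormedAddCommGroup F] [NormedSpace ℝ F]
    (a : V3) (f : V3 × ℝ → F) (p : V3 × ℝ) : F :=
  fderiv ℝ (fun y => f (y, p.2)) p.1 a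


/-- The retarded vector potential. -/
def Aret (C μ₀ : ℝ) (j : V3 × ℝ → V3) (p : V3 × ℝ) : V3 :=
  (μ₀ / (4 * π)) • ∫ y : V3, (norm3 (p.1 - y))⁻¹ • j (y, p.2 - norm3 (p.1 - y) / C)

/-- The retarded scalar potential. -/
def Vret (C ε₀ : ℝ) (ρ : V3 × ℝ → ℝ) (p : V3 × ℝ) : ℝ :=
  (1 / (4 * π * ε₀)) * ∫ y : V3, (norm3 (p.1 - y))⁻¹ * ρ (y, p.2 - norm3 (p.1 - y) / C)

/-!
Substituting `z = x - y` turns each retarded potential into an average over `z` of spacetime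
translates of its source, by vectors which do not depend on the point `(x, t)`, against the locally
integrable weight `1 / |z|`. Such an average commutes with every constant coefficient differential
operator, so that `∇·A + C⁻² ∂V/∂t` is the average of `∂ρ/∂t + ∇·j = 0`.
-/

open Function Set Metric

theorem support_fderiv_subset_preimage_fst {E E' F : Type*} [NormedAddCommGroup E]
    [NormedSpace ℝ E] [NormedAddCommGroup E'] [NormedSpace ℝ E'] [NormedAddCommGroup F]
    [NormedSpace ℝ F] {g : E × E' → F} {K : Set E} (hK : IsClosed K)
    (hgK : support g ⊆ Prod.fst ⁻¹' K) :
    support (fderiv ℝ g) ⊆ Prod.fst ⁻¹' K :=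
  (support_fderiv_subset ℝ).trans (closure_minimal hgK (hK.preimage continuous_fst))

section DelayedConvolution

variable {E F G : Type*} [NormedAddCommGroup E] [MeasurableSpace E]
  [NormedAddCommGroup F] [NormedSpace ℝ F] [NormedAddCommGroup G] [NormedSpace ℝ G]

/-- The convolution of `g` with the kernel `w` in space, the contribution from distance vector `z`
being delayed by the time `τ z`. -/
def delayedConvolution (w τ : E → ℝ) (μ : Measure E) (g : E × ℝ → F) (p : E × ℝ) : F :=
  ∫ z, w z • g (p - (z, τ z)) ∂μ

variable {w τ : E → ℝ} {μ : Measure E} {g : E × ℝ → F} {K : Set E}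

theorem integral_retarded_eq_delayedConvolution [MeasurableAdd E] [MeasurableNeg E]
    [μ.IsAddLeftInvariant] [μ.IsNegInvariant] (w τ : E → ℝ) (g : E × ℝ → F) (p : E × ℝ) :
    ∫ y, w (p.1 - y) • g (y, p.2 - τ (p.1 - y)) ∂μ = delayedConvolution w τ μ g p := by
  rw [delayedConvolution, ← integral_sub_left_eq_self _ μ p.1]
  simp only [Prod.sub_def, sub_sub_cancel]

theorem delayedConvolution_neg (w τ : E → ℝ) (μ : Measure E) (g : E × ℝ → F) (p : E × ℝ) :
    delayedConvolution w τ μ (-g) p = -delayedConvolution w τ μ g p := by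
  simp only [delayedConvolution, Pi.neg_apply, smul_neg, integral_neg]

theorem map_delayedConvolution [CompleteSpace F] [CompleteSpace G] (L : F →L[ℝ] G) {p : E × ℝ}
    (h : Integrable (fun z => w z • g (p - (z, τ z))) μ) :
    L (delayedConvolution w τ μ g p) = delayedConvolution w τ μ (fun q => L (g q)) p := by
  simp only [delayedConvolution, ← L.integral_comp_comm h, map_smul]

theorem exists_integrable_bound_smul_delayed [OpensMeasurableSpace E] (hw : LocallyIntegrable w μ)
    (hτ : Continuous τ) (hg : Continuous g) (hK : IsCompact K) (hgK : support g ⊆ Prod.fst ⁻¹' K)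
    {P : Set (E × ℝ)} (hP : IsCompact P) :
    ∃ b : E → ℝ, Integrable b μ ∧ ∀ z, ∀ p ∈ P, ‖w z • g (p - (z, τ z))‖ ≤ b z := by
  let Q : Set E := (fun q : (E × ℝ) × E => q.1.1 - q.2) '' (P ×ˢ K)
  have hQ : IsCompact Q := (hP.prod hK).image (by fun_prop)
  obtain ⟨M, hM⟩ : ∃ M, ∀ q ∈ P ×ˢ Q, ‖g (q.1 - (q.2, τ q.2))‖ ≤ M :=
    (hP.prod hQ).exists_bound_of_continuousOn (by fun_prop)
  refine ⟨Q.indicator fun z => ‖w z‖ * M, ?_, fun z p hp => ?_⟩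
  · rw [integrable_indicator_iff hQ.measurableSet]
    exact (hw.integrableOn_isCompact hQ).norm.mul_const M
  · by_cases hz : z ∈ Q
    · rw [indicator_of_mem hz, norm_smul]
      exact mul_le_mul_of_nonneg_left (hM (p, z) ⟨hp, hz⟩) (norm_nonneg _)
    · have hpz : g (p - (z, τ z)) = 0 := by
        refine notMem_support.1 fun h => hz ⟨(p, p.1 - z), ⟨hp, hgK h⟩, ?_⟩
        exact sub_sub_cancel p.1 z
      rw [indicator_of_notMem hz, hpz, smul_zero, norm_zero]

theorem aestronglyMeasurable_smul_delayed [OpensMeasurableSpace E] [SecondCountableTopology E]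
    (hw : LocallyIntegrable w μ) (hτ : Continuous τ) (hg : Continuous g) (p : E × ℝ) :
    AEStronglyMeasurable (fun z => w z • g (p - (z, τ z))) μ :=
  hw.aestronglyMeasurable.smul (Continuous.aestronglyMeasurable (by fun_prop))

theorem integrable_smul_delayed [OpensMeasurableSpace E] [SecondCountableTopology E]
    (hw : LocallyIntegrable w μ) (hτ : Continuous τ) (hg : Continuous g) (hK : IsCompact K)
    (hgK : support g ⊆ Prod.fst ⁻¹' K) (p : E × ℝ) :
    Integrable (fun z => w z • g (p - (z, τ z))) μ := by
  obtain ⟨b, hb, hgb⟩ :=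
    exists_integrable_bound_smul_delayed hw hτ hg hK hgK (isCompact_singleton (x := p))
  exact hb.mono' (aestronglyMeasurable_smul_delayed hw hτ hg p) (.of_forall fun z => hgb z p rfl)

variable [NormedSpace ℝ E] [OpensMeasurableSpace E] [ProperSpace E]

theorem hasFDerivAt_delayedConvolution (hw : LocallyIntegrable w μ) (hτ : Continuous τ)
    (hg : ContDiff ℝ 1 g) (hK : IsCompact K) (hgK : support g ⊆ Prod.fst ⁻¹' K) (p : E × ℝ) :
    HasFDerivAt (delayedConvolution w τ μ g) (delayedConvolution w τ μ (fderiv ℝ g) p) p := by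
  have hg' : Continuous (fderiv ℝ g) := hg.continuous_fderiv one_ne_zero
  obtain ⟨b, hb, hgb⟩ := exists_integrable_bound_smul_delayed hw hτ hg' hK
    (support_fderiv_subset_preimage_fst hK.isClosed hgK) (isCompact_closedBall p 1)
  have hderiv (z : E) (q : E × ℝ) :
      HasFDerivAt (fun q => w z • g (q - (z, τ z))) (w z • fderiv ℝ g (q - (z, τ z))) q :=
    ((hasFDerivAt_comp_sub _).2 (hg.differentiable one_ne_zero _).hasFDerivAt).const_smul (w z)
  exact hasFDerivAt_integral_of_dominated_of_fderiv_le (closedBall_mem_nhds p one_pos)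
    (.of_forall fun q => aestronglyMeasurable_smul_delayed hw hτ hg.continuous q)
    (integrable_smul_delayed hw hτ hg.continuous hK hgK p)
    (aestronglyMeasurable_smul_delayed hw hτ hg' p)
    (.of_forall hgb) hb (.of_forall fun z q _ => hderiv z q)

theorem map_fderiv_delayedConvolution [CompleteSpace F] [CompleteSpace G]
    (L : (E × ℝ →L[ℝ] F) →L[ℝ] G) (hw : LocallyIntegrable w μ) (hτ : Continuous τ)
    (hg : ContDiff ℝ 1 g) (hK : IsCompact K) (hgK : support g ⊆ Prod.fst ⁻¹' K) (p : E × ℝ) :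
    L (fderiv ℝ (delayedConvolution w τ μ g) p) =
      delayedConvolution w τ μ (fun q => L (fderiv ℝ g q)) p := by
  have hint := integrable_smul_delayed hw hτ (hg.continuous_fderiv one_ne_zero) hK
    (support_fderiv_subset_preimage_fst hK.isClosed hgK) p
  rw [(hasFDerivAt_delayedConvolution hw hτ hg hK hgK p).fderiv, map_delayedConvolution L hint]

end DelayedConvolution

section PartialDerivatives

variable {F : Type*} [NormedAddCommGroup F] [NormedSpace ℝ F] {f : V3 × ℝ → F} {A : V3 × ℝ → V3}
  {p : V3 × ℝ}

theorem pdS_eq_fderiv_apply (hf : DifferentiableAt ℝ f p) (i : Fin 3) :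
    pdS i f p = fderiv ℝ f p (Pi.single i 1, 0) := by
  have hslice : HasFDerivAt (fun y => f (y, p.2)) _ p.1 :=
    hf.hasFDerivAt.comp p.1 (hasFDerivAt_prodMk_left p.1 p.2)
  exact DFunLike.congr_fun hslice.fderiv _

theorem pdT_eq_fderiv_apply (hf : DifferentiableAt ℝ f p) : pdT f p = fderiv ℝ f p (0, 1) :=
  (hf.hasFDerivAt.comp_hasDerivAt p.2 (hasFDerivAt_prodMk_right p.1 p.2).hasDerivAt).deriv

/-- The trace of the spatial block of a spacetime derivative, through which the divergence
factors. -/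
def spatialTrace : (V3 × ℝ →L[ℝ] V3) →L[ℝ] ℝ :=
  ∑ i, ContinuousLinearMap.proj i ∘L ContinuousLinearMap.apply ℝ V3 (Pi.single i 1, 0)

theorem divg_eq_spatialTrace_fderiv (hA : DifferentiableAt ℝ A p) :
    divg A p = spatialTrace (fderiv ℝ A p) := by
  simp only [divg, spatialTrace, sum_apply]
  refine Finset.sum_congr rfl fun i _ => ?_
  rw [pdS_eq_fderiv_apply (differentiableAt_pi.1 hA i), fderiv_apply hA]
  rfl

theorem divg_const_smul (c : ℝ) (A : V3 × ℝ → V3) (p : V3 × ℝ) :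
    divg (c • A) p = c * divg A p := by
  simp only [divg, pdS, Finset.mul_sum]
  refine Finset.sum_congr rfl fun i _ => ?_
  exact DFunLike.congr_fun
    (congrFun (fderiv_const_smul_field (f := fun y => A (y, p.2) i) c) p.1) _

theorem pdT_const_smul (c : ℝ) (f : V3 × ℝ → F) (p : V3 × ℝ) : pdT (c • f) p = c • pdT f p :=
  deriv_const_smul_field c fun s => f (p.1, s)

end PartialDerivatives

section PartialDerivativesDelayedConvolution

variable {F : Type*} [NormedAddCommGroup F] [NormedSpace ℝ F] [CompleteSpace F]
  {w τ : V3 → ℝ} {μ : Measure V3} {K : Set V3}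

theorem pdT_delayedConvolution {g : V3 × ℝ → F} (hw : LocallyIntegrable w μ) (hτ : Continuous τ)
    (hg : ContDiff ℝ 1 g) (hK : IsCompact K) (hgK : support g ⊆ Prod.fst ⁻¹' K) (p : V3 × ℝ) :
    pdT (delayedConvolution w τ μ g) p = delayedConvolution w τ μ (pdT g) p := by
  have hpdT : pdT g = fun q => fderiv ℝ g q (0, 1) :=
    funext fun q => pdT_eq_fderiv_apply (hg.differentiable one_ne_zero q)
  rw [pdT_eq_fderiv_apply (hasFDerivAt_delayedConvolution hw hτ hg hK hgK p).differentiableAt,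
    hpdT]
  exact map_fderiv_delayedConvolution (ContinuousLinearMap.apply ℝ F (0, 1)) hw hτ hg hK hgK p

theorem divg_delayedConvolution {A : V3 × ℝ → V3} (hw : LocallyIntegrable w μ) (hτ : Continuous τ)
    (hA : ContDiff ℝ 1 A) (hK : IsCompact K) (hAK : support A ⊆ Prod.fst ⁻¹' K) (p : V3 × ℝ) :
    divg (delayedConvolution w τ μ A) p = delayedConvolution w τ μ (divg A) p := by
  have hdivg : divg A = fun q => spatialTrace (fderiv ℝ A q) :=
    funext fun q => divg_eq_spatialTrace_fderiv (hA.differentiable one_ne_zero q)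
  rw [divg_eq_spatialTrace_fderiv
    (hasFDerivAt_delayedConvolution hw hτ hA hK hAK p).differentiableAt, hdivg]
  exact map_fderiv_delayedConvolution spatialTrace hw hτ hA hK hAK p

theorem divg_delayedConvolution_add_pdT_eq_zero {ρ : V3 × ℝ → ℝ} {j : V3 × ℝ → V3}
    (hw : LocallyIntegrable w μ) (hτ : Continuous τ) (hρ : ContDiff ℝ 1 ρ) (hj : ContDiff ℝ 1 j)
    (hK : IsCompact K) (hρK : support ρ ⊆ Prod.fst ⁻¹' K) (hjK : support j ⊆ Prod.fst ⁻¹' K)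
    (hcont : ∀ p, pdT ρ p + divg j p = 0) (p : V3 × ℝ) :
    divg (delayedConvolution w τ μ j) p + pdT (delayedConvolution w τ μ ρ) p = 0 := by
  have hdivg : divg j = -pdT ρ := funext fun q => eq_neg_of_add_eq_zero_right (hcont q)
  rw [divg_delayedConvolution hw hτ hj hK hjK, pdT_delayedConvolution hw hτ hρ hK hρK, hdivg,
    delayedConvolution_neg, neg_add_cancel]

end PartialDerivativesDelayedConvolution

section RetardedPotentials

theorem norm3_eq_norm_toLp (a : V3) : norm3 a = ‖WithLp.toLp 2 a‖ := by
  simp only [norm3, dot3, EuclideanSpace.norm_eq, Real.norm_eq_abs, sq_abs, ← sq]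

theorem continuous_norm3 : Continuous norm3 := by
  simp only [funext norm3_eq_norm_toLp]
  fun_prop

theorem norm_le_norm3 (a : V3) : ‖a‖ ≤ norm3 a := by
  rw [norm3_eq_norm_toLp]
  exact (pi_norm_le_iff_of_nonneg (norm_nonneg _)).2 (PiLp.norm_apply_le (WithLp.toLp 2 a))

theorem locallyIntegrable_inv_norm3 : LocallyIntegrable fun z : V3 => (norm3 z)⁻¹ := by
  refine locallyIntegrable_of_norm_le_rpow (C := 1) (α := 1) (by simp) (by simp)
    (.of_forall fun z => ?_) continuous_norm3.measurable.inv.aestronglyMeasurable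
  rw [Real.rpow_neg_one, one_mul, norm_inv, norm3_eq_norm_toLp, norm_norm, ← norm3_eq_norm_toLp]
  rcases eq_or_ne z 0 with rfl | hz
  · simp [norm3_eq_norm_toLp]
  · exact inv_anti₀ (norm_pos_iff.2 hz) (norm_le_norm3 z)

theorem Aret_eq_smul_delayedConvolution (C μ₀ : ℝ) (j : V3 × ℝ → V3) :
    Aret C μ₀ j = (μ₀ / (4 * π)) •
      delayedConvolution (fun z => (norm3 z)⁻¹) (fun z => norm3 z / C) volume j := by
  ext1 p
  exact congrArg _ (integral_retarded_eq_delayedConvolution (fun z => (norm3 z)⁻¹)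
    (fun z => norm3 z / C) j p)

theorem Vret_eq_smul_delayedConvolution (C ε₀ : ℝ) (ρ : V3 × ℝ → ℝ) :
    Vret C ε₀ ρ = (1 / (4 * π * ε₀)) •
      delayedConvolution (fun z => (norm3 z)⁻¹) (fun z => norm3 z / C) volume ρ := by
  ext1 p
  exact congrArg _ (integral_retarded_eq_delayedConvolution (fun z => (norm3 z)⁻¹)
    (fun z => norm3 z / C) ρ p)

end RetardedPotentials

-- For `C < 0` these are the advanced potentials.
theorem retarded_potentials_lorenz_gauge_general
    (C μ₀ ε₀ : ℝ) (hC : C ≠ 0) (hCμε : C ^ 2 = 1 / (μ₀ * ε₀))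
    (ρ : V3 × ℝ → ℝ) (j : V3 × ℝ → V3) (hρ : ContDiff ℝ 1 ρ) (hj : ContDiff ℝ 1 j)
    (K : Set V3) (hK : IsCompact K)
    (hsuppρ : ∀ t : ℝ, (support fun y => ρ (y, t)) ⊆ K)
    (hsuppj : ∀ t : ℝ, (support fun y => j (y, t)) ⊆ K)
    (hcont : ∀ p : V3 × ℝ, pdT ρ p + divg j p = 0) (p : V3 × ℝ) :
    divg (Aret C μ₀ j) p + (1 / C ^ 2) * pdT (Vret C ε₀ ρ) p = 0 := by
  have hμε : μ₀ * ε₀ ≠ 0 := fun h => hC (by simpa [h] using hCμε)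
  have hconst : 1 / C ^ 2 * (1 / (4 * π * ε₀)) = μ₀ / (4 * π) := by
    have hε : ε₀ ≠ 0 := right_ne_zero_of_mul hμε
    rw [hCμε]
    field_simp
  have hgauge := divg_delayedConvolution_add_pdT_eq_zero locallyIntegrable_inv_norm3
    (continuous_norm3.div_const C) hρ hj hK (fun q hq => hsuppρ q.2 hq)
    (fun q hq => hsuppj q.2 hq) hcont p
  rw [Aret_eq_smul_delayedConvolution, Vret_eq_smul_delayedConvolution, divg_const_smul,
    pdT_const_smul, smul_eq_mul, ← mul_assoc, hconst, ← mul_add, hgauge, mul_zero]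

/-- The retarded potentials of sources satisfying the continuity equation
satisfy the Lorenz gauge condition `∇·A + (1/C²) ∂V/∂t = 0`. -/
theorem retarded_potentials_lorenz_gauge
    (C μ₀ ε₀ : ℝ) (hC : 0 < C) (hμ : 0 < μ₀) (hε : 0 < ε₀)
    (hCμε : C ^ 2 = 1 / (μ₀ * ε₀))
    (ρ : V3 × ℝ → ℝ) (j : V3 × ℝ → V3)
    (hρ : ContDiff ℝ (⊤ : ℕ∞) ρ) (hj : ContDiff ℝ (⊤ : ℕ∞) j)
    (K : Set V3) (hK : IsCompact K)
    (hsuppρ : ∀ t : ℝ, (Function.support fun y => ρ (y, t)) ⊆ K)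
    (hsuppj : ∀ t : ℝ, (Function.support fun y => j (y, t)) ⊆ K)
    (hcont : ∀ p : V3 × ℝ, pdT ρ p + divg j p = 0) :
    ∀ p : V3 × ℝ, divg (Aret C μ₀ j) p + (1 / C ^ 2) * pdT (Vret C ε₀ ρ) p = 0 :=
  retarded_potentials_lorenz_gauge_general C μ₀ ε₀ hC.ne' hCμε ρ j
    (hρ.of_le (by simp)) (hj.of_le (by simp)) K hK hsuppρ hsuppj hcont
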